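/- arXiv:1511.03993 — 3 statements merged into one kernel-verified Lean document; each statement's English description precedes it below -/
import Mathlib

section
/- There exist five quintuples of real numbers (u0, u1, u2, x2, x3) satisfying g0 = g1 = g2 = g3 = g4 = 0, one in each of the following boxes: (i) 0.96 < u0 < 0.97, 0.07 < u1 < 0.08, 0.24 < u2 < 0.25, 0.66 < x2 < 0.67, 1.18 < x3 < 1.19; (ii) 0.12 < u0 < 0.13, 0.10 < u1 < 0.11, 0.24 < u2 < 0.25, 1.00 < x2 < 1.01, 0.121 < x3 < 0.122; (iii) 0.22 < u0 < 0.23, 0.15 < u1 < 0.16, 1.13 < u2 < 1.14, 1.00 < x2 < 1.01, 0.207 < x3 < 0.208; (iv) 1.57 < u0 < 1.58, 1.36 < u1 < 1.37, 0.31 < u2 < 0.32, 1.11 < x2 < 1.12, 1.53 < x3 < 1.54; (v) 2.18 < u0 < 2.19, 0.10 < u1 < 0.11, 0.33 < u2 < 0.34, 1.59 < x2 < 1.60, 2.16 < x3 < 2.17. (These give five non-isometric non-naturally reductive left-invariant Einstein metrics on E7 associated to the subgroup SU(6)xSU(2)xU(1).) -/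
noncomputable def g0 (u0 u1 u2 x2 x3 : ℝ) : ℝ :=
  5*u0*u1*x2 ^ 2*x3 ^ 2 + 3*u0*u1*x2 ^ 2 + 10*u0*u1*x3 ^ 2 - 15*u1 ^ 2*x2 ^ 2*x3 ^ 2 - u1 ^ 2*x2 ^ 2 - 2*x2 ^ 2*x3 ^ 2

noncomputable def g1 (u0 u1 u2 x2 x3 : ℝ) : ℝ :=
  15*u1 ^ 2*u2*x2 ^ 2*x3 ^ 2 + u1 ^ 2*u2*x2 ^ 2 - 8*u1*u2 ^ 2*x2 ^ 2*x3 ^ 2 - 4*u1*u2 ^ 2*x3 ^ 2 - 6*u1*x2 ^ 2*x3 ^ 2 + 2*u2*x2 ^ 2*x3 ^ 2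

noncomputable def g2 (u0 u1 u2 x2 x3 : ℝ) : ℝ :=
  u0*u2*x2 ^ 2*x3 + 9*u1*u2*x2 ^ 2*x3 + 104*u2 ^ 2*x2 ^ 2*x3 + 24*u2 ^ 2*x3 + 36*u2*x2 ^ 3*x3 + 6*u2*x2 ^ 3 - 216*u2*x2 ^ 2*x3 + 6*u2*x2*x3 ^ 2 - 6*u2*x2 + 36*x2 ^ 2*x3

noncomputable def g3 (u0 u1 u2 x2 x3 : ℝ) : ℝ :=
  -u0*x2 ^ 2*x3 + 4*u0*x3 - 9*u1*x2 ^ 2*x3 - 56*u2*x2 ^ 2*x3 + 56*u2*x3 - 72*x2 ^ 3*x3 - 18*x2 ^ 3 + 216*x2 ^ 2*x3 + 6*x2*x3 ^ 2 - 144*x2*x3 + 18*x2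

noncomputable def g4 (u0 u1 u2 x2 x3 : ℝ) : ℝ :=
  9*u0*x2 ^ 2 - 4*u0*x3 ^ 2 + 9*u1*x2 ^ 2 - 56*u2*x3 ^ 2 + 36*x2 ^ 3*x3 ^ 2 + 102*x2 ^ 3*x3 - 216*x2 ^ 2*x3 - 102*x2*x3 ^ 3 + 144*x2*x3 ^ 2 + 78*x2*x3

/-!
Each solution is certified by a quantitative Newton argument. Let `c` be an approximate zero of the
system, `J` its Jacobian and `V` an approximate inverse of `J c`. Near `c` the derivative
`V J` of `x ↦ V (f x)` differs from the identity by at most `‖1 - V J(c)‖ + ‖V‖ ‖J - J(c)‖`, so if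
this is less than `1` and `V (f c)` is small enough then `x ↦ x - V (f x)` is a contraction of a
small ball about `c`, whose fixed point is an exact zero. The Lipschitz constant of `J` is obtained
by propagating bounds on a function, its derivative and the Lipschitz constant of its derivative
through sums and products.
-/

open Metric Matrix
open scoped Matrix.Norms.Operator

section Banach

variable {E F : Type*} [NormedAddCommGroup E] [NormedSpace ℝ E] [CompleteSpace E]
  [NormedAddCommGroup F] [NormedSpace ℝ F]

theorem exists_mem_closedBall_eq_zero_of_norm_comp_fderiv_sub_id_le
    {f : E → F} {f' : E → E →L[ℝ] F} {A : F →L[ℝ] E} {c : E} {r κ : ℝ}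
    (hA : Function.Injective A) (hr : 0 ≤ r)
    (hf : ∀ x ∈ closedBall c r, HasFDerivWithinAt f (f' x) (closedBall c r) x)
    (hκ : ∀ x ∈ closedBall c r, ‖A ∘L f' x - .id ℝ E‖ ≤ κ)
    (hc : ‖A (f c)‖ ≤ (1 - κ) * r) :
    ∃ x ∈ closedBall c r, f x = 0 := by
  lift κ to NNReal using (norm_nonneg _).trans (hκ c (mem_closedBall_self hr))
  have happrox : ApproximatesLinearOn (A ∘ f) (.id ℝ E) (closedBall c r) κ := by
    intro x hx y hy
    exact Convex.norm_image_sub_le_of_norm_hasFDerivWithin_le'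
      (fun z hz ↦ A.hasFDerivAt.comp_hasFDerivWithinAt z (hf z hz)) hκ
      (convex_closedBall c r) hy hx
  let idInv : (ContinuousLinearMap.id ℝ E).NonlinearRightInverse :=
    ⟨id, 1, fun y ↦ by simp, fun y ↦ rfl⟩
  obtain ⟨x, hx, hAx⟩ := happrox.surjOn_closedBall_of_nonlinearRightInverse idInv hr subset_rfl
    (show (0 : E) ∈ _ by simpa [idInv] using hc)
  exact ⟨x, hx, hA (hAx.trans A.map_zero.symm)⟩

end Banach

section Jacobian

variable {ι : Type*} [Fintype ι] [DecidableEq ι]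

theorem linfty_opNorm_le_iff {m n : Type*} [Fintype m] [Fintype n] {A : Matrix m n ℝ} {C : ℝ}
    (hC : 0 ≤ C) : ‖A‖ ≤ C ↔ ∀ i, ∑ j, |A i j| ≤ C := by
  lift C to NNReal using hC
  rw [linfty_opNorm_def, NNReal.coe_le_coe, Finset.sup_le_iff]
  simp [← NNReal.coe_le_coe]

theorem exists_mem_closedBall_eq_zero_of_norm_one_sub_mul_jacobian_add_lt_one
    {f : (ι → ℝ) → ι → ℝ} {J : (ι → ℝ) → Matrix ι ι ℝ} {V : Matrix ι ι ℝ} {c : ι → ℝ} {r L : ℝ}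
    (hr : 0 ≤ r)
    (hf : ∀ x ∈ closedBall c r, HasFDerivWithinAt f (.mk (J x).mulVecLin) (closedBall c r) x)
    (hJ : ∀ x ∈ closedBall c r, ‖J x - J c‖ ≤ L)
    (hV : ‖1 - V * J c‖ + ‖V‖ * L < 1)
    (hc : ‖V *ᵥ f c‖ ≤ (1 - (‖1 - V * J c‖ + ‖V‖ * L)) * r) :
    ∃ x ∈ closedBall c r, f x = 0 := by
  have hL : 0 ≤ L := (norm_nonneg _).trans (hJ c (mem_closedBall_self hr))
  have hVunit : IsUnit V := by
    have hlt : ‖1 - V * J c‖ < 1 := lt_of_le_of_lt (le_add_of_nonneg_right (by positivity)) hV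
    exact isUnit_of_mul_isUnit_left (y := J c) (by simpa using isUnit_one_sub_of_norm_lt_one hlt)
  refine exists_mem_closedBall_eq_zero_of_norm_comp_fderiv_sub_id_le (A := .mk V.mulVecLin)
    (mulVec_injective_iff_isUnit.2 hVunit) hr hf (fun x hx ↦ ?_) hc
  have hmat : ContinuousLinearMap.mk V.mulVecLin ∘L .mk (J x).mulVecLin - .id ℝ (ι → ℝ) =
      .mk (V * (J x - J c) - (1 - V * J c)).mulVecLin := by
    ext1 v
    change V *ᵥ J x *ᵥ v - v = (V * (J x - J c) - (1 - V * J c)) *ᵥ v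
    simp [mul_sub, sub_mulVec]
  calc ‖ContinuousLinearMap.mk V.mulVecLin ∘L .mk (J x).mulVecLin - .id ℝ (ι → ℝ)‖
      = ‖V * (J x - J c) - (1 - V * J c)‖ := by rw [hmat, linfty_opNorm_eq_opNorm]
    _ ≤ ‖V * (J x - J c)‖ + ‖1 - V * J c‖ := norm_sub_le _ _
    _ ≤ ‖V‖ * L + ‖1 - V * J c‖ := by
      gcongr
      exact (norm_mul_le _ _).trans (by gcongr; exact hJ x hx)
    _ = ‖1 - V * J c‖ + ‖V‖ * L := add_comm _ _

end Jacobian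

/-- Explicit `C^{1,1}` bounds on `s`: the function `f` has derivative `f'` on `s`, `|f| ≤ M`,
`‖f'‖ ≤ N`, and `f'` is `K`-Lipschitz. The derivative is carried along as data so that it can be
compared with a Jacobian matrix computed by hand. -/
structure C11BoundOn {E : Type*} [NormedAddCommGroup E] [NormedSpace ℝ E] (f : E → ℝ)
    (f' : E → E →L[ℝ] ℝ) (s : Set E) (M N K : ℝ) : Prop where
  hasFDerivWithinAt : ∀ x ∈ s, HasFDerivWithinAt f (f' x) s x
  abs_le : ∀ x ∈ s, |f x| ≤ M
  norm_fderiv_le : ∀ x ∈ s, ‖f' x‖ ≤ N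
  norm_fderiv_sub_le : ∀ x ∈ s, ∀ y ∈ s, ‖f' x - f' y‖ ≤ K * ‖x - y‖

namespace C11BoundOn

variable {E : Type*} [NormedAddCommGroup E] [NormedSpace ℝ E] {s : Set E}
  {f g : E → ℝ} {f' g' : E → E →L[ℝ] ℝ} {M₁ N₁ K₁ M₂ N₂ K₂ : ℝ}

theorem const (a : ℝ) : C11BoundOn (fun _ ↦ a) (fun _ ↦ (0 : E →L[ℝ] ℝ)) s |a| 0 0 where
  hasFDerivWithinAt x _ := hasFDerivWithinAt_const a x s
  abs_le _ _ := le_rfl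
  norm_fderiv_le _ _ := by simp
  norm_fderiv_sub_le _ _ _ _ := by simp

theorem neg (hf : C11BoundOn f f' s M₁ N₁ K₁) :
    C11BoundOn (fun x ↦ -f x) (fun x ↦ -f' x) s M₁ N₁ K₁ where
  hasFDerivWithinAt x hx := (hf.hasFDerivWithinAt x hx).neg
  abs_le x hx := by simpa using hf.abs_le x hx
  norm_fderiv_le x hx := by simpa using hf.norm_fderiv_le x hx
  norm_fderiv_sub_le x hx y hy := by
    simpa [neg_add_eq_sub, norm_sub_rev] using hf.norm_fderiv_sub_le x hx y hy

theorem add (hf : C11BoundOn f f' s M₁ N₁ K₁) (hg : C11BoundOn g g' s M₂ N₂ K₂) :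
    C11BoundOn (fun x ↦ f x + g x) (fun x ↦ f' x + g' x) s (M₁ + M₂) (N₁ + N₂) (K₁ + K₂) where
  hasFDerivWithinAt x hx := (hf.hasFDerivWithinAt x hx).add (hg.hasFDerivWithinAt x hx)
  abs_le x hx := (abs_add_le _ _).trans (add_le_add (hf.abs_le x hx) (hg.abs_le x hx))
  norm_fderiv_le x hx := norm_add_le_of_le (hf.norm_fderiv_le x hx) (hg.norm_fderiv_le x hx)
  norm_fderiv_sub_le x hx y hy := by
    rw [add_sub_add_comm, add_mul]
    exact norm_add_le_of_le (hf.norm_fderiv_sub_le x hx y hy) (hg.norm_fderiv_sub_le x hx y hy)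

theorem sub (hf : C11BoundOn f f' s M₁ N₁ K₁) (hg : C11BoundOn g g' s M₂ N₂ K₂) :
    C11BoundOn (fun x ↦ f x - g x) (fun x ↦ f' x - g' x) s (M₁ + M₂) (N₁ + N₂) (K₁ + K₂) := by
  simpa only [sub_eq_add_neg] using hf.add hg.neg

theorem abs_sub_le (hf : C11BoundOn f f' s M₁ N₁ K₁) (hs : Convex ℝ s) {x y : E} (hx : x ∈ s)
    (hy : y ∈ s) : |f x - f y| ≤ N₁ * ‖x - y‖ :=
  hs.norm_image_sub_le_of_norm_hasFDerivWithin_le hf.hasFDerivWithinAt hf.norm_fderiv_le hy hx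

theorem norm_smul_fderiv_sub_smul_fderiv_le (hs : Convex ℝ s) (hf : C11BoundOn f f' s M₁ N₁ K₁)
    (hg : C11BoundOn g g' s M₂ N₂ K₂) {x y : E} (hx : x ∈ s) (hy : y ∈ s) :
    ‖f x • g' x - f y • g' y‖ ≤ (M₁ * K₂ + N₁ * N₂) * ‖x - y‖ := by
  calc ‖f x • g' x - f y • g' y‖ = ‖f x • (g' x - g' y) + (f x - f y) • g' y‖ := by
        congr 1; module
    _ ≤ ‖f x • (g' x - g' y)‖ + ‖(f x - f y) • g' y‖ := norm_add_le _ _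
    _ = |f x| * ‖g' x - g' y‖ + |f x - f y| * ‖g' y‖ := by simp only [norm_smul, Real.norm_eq_abs]
    _ ≤ M₁ * (K₂ * ‖x - y‖) + N₁ * ‖x - y‖ * N₂ := by
      gcongr
      · exact (abs_nonneg _).trans (hf.abs_le x hx)
      · exact hf.abs_le x hx
      · exact hg.norm_fderiv_sub_le x hx y hy
      · exact (abs_nonneg _).trans (hf.abs_sub_le hs hx hy)
      · exact hf.abs_sub_le hs hx hy
      · exact hg.norm_fderiv_le y hy
    _ = (M₁ * K₂ + N₁ * N₂) * ‖x - y‖ := by ring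

theorem mul (hs : Convex ℝ s) (hf : C11BoundOn f f' s M₁ N₁ K₁)
    (hg : C11BoundOn g g' s M₂ N₂ K₂) :
    C11BoundOn (fun x ↦ f x * g x) (fun x ↦ f x • g' x + g x • f' x) s
      (M₁ * M₂) (M₁ * N₂ + M₂ * N₁) ((M₁ * K₂ + N₁ * N₂) + (M₂ * K₁ + N₂ * N₁)) where
  hasFDerivWithinAt x hx := (hf.hasFDerivWithinAt x hx).mul (hg.hasFDerivWithinAt x hx)
  abs_le x hx := by
    have hM₁ : 0 ≤ M₁ := (abs_nonneg _).trans (hf.abs_le x hx)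
    rw [abs_mul]
    exact mul_le_mul (hf.abs_le x hx) (hg.abs_le x hx) (abs_nonneg _) hM₁
  norm_fderiv_le x hx := by
    have hM₁ : 0 ≤ M₁ := (abs_nonneg _).trans (hf.abs_le x hx)
    have hM₂ : 0 ≤ M₂ := (abs_nonneg _).trans (hg.abs_le x hx)
    refine norm_add_le_of_le ?_ ?_ <;> rw [norm_smul]
    · exact mul_le_mul (hf.abs_le x hx) (hg.norm_fderiv_le x hx) (norm_nonneg _) hM₁
    · exact mul_le_mul (hg.abs_le x hx) (hf.norm_fderiv_le x hx) (norm_nonneg _) hM₂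
  norm_fderiv_sub_le x hx y hy := by
    rw [add_sub_add_comm, add_mul]
    exact norm_add_le_of_le (norm_smul_fderiv_sub_smul_fderiv_le hs hf hg hx hy)
      (norm_smul_fderiv_sub_smul_fderiv_le hs hg hf hx hy)

theorem congr_of_le {f'' : E → E →L[ℝ] ℝ} (hf : C11BoundOn f f' s M₁ N₁ K₁) (h : ∀ x, f' x = f'' x)
    (hM : M₁ ≤ M₂) (hN : N₁ ≤ N₂) (hK : K₁ ≤ K₂) : C11BoundOn f f'' s M₂ N₂ K₂ := by
  obtain rfl : f' = f'' := funext h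
  exact
    { hasFDerivWithinAt := hf.hasFDerivWithinAt
      abs_le := fun x hx ↦ (hf.abs_le x hx).trans hM
      norm_fderiv_le := fun x hx ↦ (hf.norm_fderiv_le x hx).trans hN
      norm_fderiv_sub_le := fun x hx y hy ↦ (hf.norm_fderiv_sub_le x hx y hy).trans (by gcongr) }

variable {ι : Type*} [Fintype ι]

theorem proj {R : ℝ} (i : ι) :
    C11BoundOn (fun p : ι → ℝ ↦ p i) (fun _ ↦ .proj i) (closedBall 0 R) R 1 0 where
  hasFDerivWithinAt x _ := (hasFDerivAt_apply i x).hasFDerivWithinAt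
  abs_le x hx := (norm_le_pi_norm x i).trans (mem_closedBall_zero_iff.1 hx)
  norm_fderiv_le _ _ := ContinuousLinearMap.opNorm_le_bound _ zero_le_one fun x ↦ by
    simpa using norm_le_pi_norm x i
  norm_fderiv_sub_le _ _ _ _ := by simp

theorem norm_jacobian_sub_le {f : (ι → ℝ) → ι → ℝ} {J : (ι → ℝ) → Matrix ι ι ℝ}
    {s : Set (ι → ℝ)} {M N K : ℝ} (hK : 0 ≤ K)
    (hf : ∀ i, C11BoundOn (fun x ↦ f x i) (fun x ↦ .proj i ∘L .mk (J x).mulVecLin) s M N K)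
    {x y : ι → ℝ} (hx : x ∈ s) (hy : y ∈ s) : ‖J x - J y‖ ≤ K * ‖x - y‖ := by
  rw [linfty_opNorm_eq_opNorm]
  refine ContinuousLinearMap.opNorm_le_bound _ (by positivity) fun v ↦ ?_
  refine (pi_norm_le_iff_of_nonneg (by positivity)).2 fun i ↦ ?_
  change ‖((J x - J y) *ᵥ v) i‖ ≤ _
  rw [sub_mulVec]
  exact ContinuousLinearMap.le_of_opNorm_le _ ((hf i).norm_fderiv_sub_le x hx y hy) v

end C11BoundOn

/-- The polynomials `g0, …, g4` as a self-map of `ℝ⁵`, with coordinates ordered as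
`(u0, u1, u2, x2, x3)`. -/
noncomputable def einsteinSystem (p : Fin 5 → ℝ) : Fin 5 → ℝ :=
  ![g0 (p 0) (p 1) (p 2) (p 3) (p 4), g1 (p 0) (p 1) (p 2) (p 3) (p 4),
    g2 (p 0) (p 1) (p 2) (p 3) (p 4), g3 (p 0) (p 1) (p 2) (p 3) (p 4),
    g4 (p 0) (p 1) (p 2) (p 3) (p 4)]

/-- The matrix of partial derivatives of `g0, …, g4` (rows) with respect to `u0, u1, u2, x2, x3`
(columns). -/
def jacobianMatrix (u0 u1 u2 x2 x3 : ℝ) : Matrix (Fin 5) (Fin 5) ℝ :=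
  !![5 * u1 * x2 ^ 2 * x3 ^ 2 + 3 * u1 * x2 ^ 2 + 10 * u1 * x3 ^ 2,
     5 * u0 * x2 ^ 2 * x3 ^ 2 + 3 * u0 * x2 ^ 2 + 10 * u0 * x3 ^ 2 - 30 * u1 * x2 ^ 2 * x3 ^ 2
       - 2 * u1 * x2 ^ 2,
     0,
     10 * u0 * u1 * x2 * x3 ^ 2 + 6 * u0 * u1 * x2 - 30 * u1 ^ 2 * x2 * x3 ^ 2 - 2 * u1 ^ 2 * x2
       - 4 * x2 * x3 ^ 2,
     10 * u0 * u1 * x2 ^ 2 * x3 + 20 * u0 * u1 * x3 - 30 * u1 ^ 2 * x2 ^ 2 * x3 - 4 * x2 ^ 2 * x3;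
     0,
     30 * u1 * u2 * x2 ^ 2 * x3 ^ 2 + 2 * u1 * u2 * x2 ^ 2 - 8 * u2 ^ 2 * x2 ^ 2 * x3 ^ 2
       - 4 * u2 ^ 2 * x3 ^ 2 - 6 * x2 ^ 2 * x3 ^ 2,
     15 * u1 ^ 2 * x2 ^ 2 * x3 ^ 2 + u1 ^ 2 * x2 ^ 2 - 16 * u1 * u2 * x2 ^ 2 * x3 ^ 2
       - 8 * u1 * u2 * x3 ^ 2 + 2 * x2 ^ 2 * x3 ^ 2,
     30 * u1 ^ 2 * u2 * x2 * x3 ^ 2 + 2 * u1 ^ 2 * u2 * x2 - 16 * u1 * u2 ^ 2 * x2 * x3 ^ 2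
       - 12 * u1 * x2 * x3 ^ 2 + 4 * u2 * x2 * x3 ^ 2,
     30 * u1 ^ 2 * u2 * x2 ^ 2 * x3 - 16 * u1 * u2 ^ 2 * x2 ^ 2 * x3 - 8 * u1 * u2 ^ 2 * x3
       - 12 * u1 * x2 ^ 2 * x3 + 4 * u2 * x2 ^ 2 * x3;
     u2 * x2 ^ 2 * x3,
     9 * u2 * x2 ^ 2 * x3,
     u0 * x2 ^ 2 * x3 + 9 * u1 * x2 ^ 2 * x3 + 208 * u2 * x2 ^ 2 * x3 + 48 * u2 * x3
       + 36 * x2 ^ 3 * x3 + 6 * x2 ^ 3 - 216 * x2 ^ 2 * x3 + 6 * x2 * x3 ^ 2 - 6 * x2,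
     2 * u0 * u2 * x2 * x3 + 18 * u1 * u2 * x2 * x3 + 208 * u2 ^ 2 * x2 * x3
       + 108 * u2 * x2 ^ 2 * x3 + 18 * u2 * x2 ^ 2 - 432 * u2 * x2 * x3 + 6 * u2 * x3 ^ 2
       - 6 * u2 + 72 * x2 * x3,
     u0 * u2 * x2 ^ 2 + 9 * u1 * u2 * x2 ^ 2 + 104 * u2 ^ 2 * x2 ^ 2 + 24 * u2 ^ 2
       + 36 * u2 * x2 ^ 3 - 216 * u2 * x2 ^ 2 + 12 * u2 * x2 * x3 + 36 * x2 ^ 2;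
     -x2 ^ 2 * x3 + 4 * x3,
     -9 * x2 ^ 2 * x3,
     -56 * x2 ^ 2 * x3 + 56 * x3,
     -2 * u0 * x2 * x3 - 18 * u1 * x2 * x3 - 112 * u2 * x2 * x3 - 216 * x2 ^ 2 * x3 - 54 * x2 ^ 2
       + 432 * x2 * x3 + 6 * x3 ^ 2 - 144 * x3 + 18,
     -u0 * x2 ^ 2 + 4 * u0 - 9 * u1 * x2 ^ 2 - 56 * u2 * x2 ^ 2 + 56 * u2 - 72 * x2 ^ 3
       + 216 * x2 ^ 2 + 12 * x2 * x3 - 144 * x2;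
     9 * x2 ^ 2 - 4 * x3 ^ 2,
     9 * x2 ^ 2,
     -56 * x3 ^ 2,
     18 * u0 * x2 + 18 * u1 * x2 + 108 * x2 ^ 2 * x3 ^ 2 + 306 * x2 ^ 2 * x3 - 432 * x2 * x3
       - 102 * x3 ^ 3 + 144 * x3 ^ 2 + 78 * x3,
     -8 * u0 * x3 - 112 * u2 * x3 + 72 * x2 ^ 3 * x3 + 102 * x2 ^ 3 - 216 * x2 ^ 2
       - 306 * x2 * x3 ^ 2 + 288 * x2 * x3 + 78 * x2]

/-- The Jacobian matrix of `einsteinSystem`. -/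
def einsteinJacobian (p : Fin 5 → ℝ) : Matrix (Fin 5) (Fin 5) ℝ :=
  jacobianMatrix (p 0) (p 1) (p 2) (p 3) (p 4)

theorem c11BoundOn_einsteinSystem (i : Fin 5) :
    C11BoundOn (fun p ↦ einsteinSystem p i)
      (fun p ↦ .proj i ∘L .mk (einsteinJacobian p).mulVecLin)
      (closedBall 0 (5 / 2)) (10 ^ 6) (10 ^ 6) (10 ^ 6) := by
  have hconv : Convex ℝ (closedBall (0 : Fin 5 → ℝ) (5 / 2)) := convex_closedBall _ _
  fin_cases i
  all_goals
    simp only [einsteinSystem, g0, g1, g2, g3, g4, pow_succ, pow_zero, one_mul, Fin.zero_eta,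
      Fin.mk_one, Fin.reduceFinMk, Matrix.cons_val, Matrix.cons_val_zero, Matrix.cons_val_one]
    apply C11BoundOn.congr_of_le
    case hf =>
      repeat' with_reducible first
        | exact C11BoundOn.proj _
        | exact C11BoundOn.const _
        | apply C11BoundOn.mul hconv
        | apply C11BoundOn.add
        | apply C11BoundOn.sub
        | apply C11BoundOn.neg
    case hM => norm_num
    case hN => norm_num
    case hK => norm_num
    case h =>
      intro x
      ext v
      simp only [_root_.add_apply, _root_.sub_apply, _root_.neg_apply, _root_.smul_apply,
        _root_.zero_apply, smul_eq_mul, ContinuousLinearMap.proj_apply,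
        ContinuousLinearMap.comp_apply, ContinuousLinearMap.coe_mk', mulVecBilin_apply, mulVec,
        dotProduct, Fin.sum_univ_five, einsteinJacobian, jacobianMatrix, of_apply, Matrix.cons_val]
      ring

theorem exists_einsteinSystem_eq_zero_dist_le {c : Fin 5 → ℝ} {V : Matrix (Fin 5) (Fin 5) ℝ}
    (hc : ‖c‖ ≤ 9 / 4) (hV : ‖V‖ ≤ 200) (hVJ : ‖1 - V * einsteinJacobian c‖ ≤ 1 / 4)
    (hVc : ‖V *ᵥ einsteinSystem c‖ ≤ 1 / (2 * 10 ^ 9)) :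
    ∃ p, dist p c ≤ 1 / 10 ^ 9 ∧ einsteinSystem p = 0 := by
  have hball : closedBall c (1 / 10 ^ 9) ⊆ closedBall 0 (5 / 2) :=
    closedBall_subset_closedBall' (by rw [dist_zero_right]; linarith)
  have hderiv : ∀ x ∈ closedBall c (1 / 10 ^ 9), HasFDerivWithinAt einsteinSystem
      (.mk (einsteinJacobian x).mulVecLin) (closedBall c (1 / 10 ^ 9)) x := fun x hx ↦
    hasFDerivWithinAt_pi'' fun i ↦
      ((c11BoundOn_einsteinSystem i).hasFDerivWithinAt x (hball hx)).mono hball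
  have hlip : ∀ x ∈ closedBall c (1 / 10 ^ 9),
      ‖einsteinJacobian x - einsteinJacobian c‖ ≤ 1 / 10 ^ 3 := by
    intro x hx
    calc ‖einsteinJacobian x - einsteinJacobian c‖ ≤ 10 ^ 6 * ‖x - c‖ :=
          C11BoundOn.norm_jacobian_sub_le (by positivity) c11BoundOn_einsteinSystem (hball hx)
            (hball (mem_closedBall_self (by norm_num)))
      _ ≤ 10 ^ 6 * (1 / 10 ^ 9) := by gcongr; exact mem_closedBall_iff_norm.1 hx
      _ = 1 / 10 ^ 3 := by norm_num
  have hdefect : ‖1 - V * einsteinJacobian c‖ + ‖V‖ * (1 / 10 ^ 3) ≤ 1 / 2 := by linarith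
  exact exists_mem_closedBall_eq_zero_of_norm_one_sub_mul_jacobian_add_lt_one (V := V)
    (by norm_num) hderiv hlip (hdefect.trans_lt one_half_lt_one) (by linarith [hdefect])

/-- The lower corners of the five boxes, in the coordinates of `einsteinSystem`. -/
def boxLower : Fin 5 → Fin 5 → ℝ :=
  ![![0.96, 0.07, 0.24, 0.66, 1.18],
    ![0.12, 0.10, 0.24, 1.00, 0.121],
    ![0.22, 0.15, 1.13, 1.00, 0.207],
    ![1.57, 1.36, 0.31, 1.11, 1.53],
    ![2.18, 0.10, 0.33, 1.59, 2.16]]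

/-- The upper corners of the five boxes, in the coordinates of `einsteinSystem`. -/
def boxUpper : Fin 5 → Fin 5 → ℝ :=
  ![![0.97, 0.08, 0.25, 0.67, 1.19],
    ![0.13, 0.11, 0.25, 1.01, 0.122],
    ![0.23, 0.16, 1.14, 1.01, 0.208],
    ![1.58, 1.37, 0.32, 1.12, 1.54],
    ![2.19, 0.11, 0.34, 1.60, 2.17]]

/-- Approximate zeros of `einsteinSystem`, one in each box, found by Newton iteration and rounded to
ten decimals. -/
def approxZero : Fin 5 → Fin 5 → ℝ :=
  ![![0.9622410151, 0.0736217309, 0.2488048768, 0.6699476174, 1.1800573459],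
    ![0.1259040740, 0.1084394139, 0.2454130524, 1.0005213531, 0.1216930078],
    ![0.2232933212, 0.1536101118, 1.1356289833, 1.0023023878, 0.2075486054],
    ![1.5711912321, 1.3666214912, 0.3157738045, 1.1132523069, 1.5303651869],
    ![2.1869813437, 0.1030980827, 0.3385159970, 1.5911458949, 2.1692737914]]

/-- The inverses of the Jacobian matrices at `approxZero`, rounded to four decimals. -/
def approxInverse : Fin 5 → Matrix (Fin 5) (Fin 5) ℝ :=
  ![!![0.5894, 2.3345, 0.0685, 0.0459, -0.0003;
       -0.0011, -0.2536, -0.0038, 0.0005, -0.0001;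
       0.0009, -0.0018, -0.0174, 0.0001, -0.0003;
       -0.0731, -0.3184, 0.0099, 0.0234, 0.0001;
       -0.0322, -0.1425, 0.0169, 0.0059, -0.0110],
    !![-7.1012, 71.7288, 0.1537, 0.0453, 0.3869;
       7.0461, -71.5152, -0.1599, -0.0389, -0.2732;
       -0.0673, 0.2680, -0.0707, -0.0082, 0.0032;
       -0.4835, 4.2900, 0.0094, -0.0299, 0.0201;
       -5.1832, 31.2333, 0.0650, 0.0218, 0.2014],
    !![-1.4701, 3.8731, 0.0298, 0.0409, 0.2023;
       1.3255, -3.7831, -0.0173, -0.0211, -0.0821;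
       0.0450, 0.1395, 0.0421, 0.0075, -0.0045;
       -0.1336, 0.2418, 0.0015, -0.0187, 0.0097;
       -1.8401, 1.3031, 0.0148, 0.0222, 0.1147],
    !![0.0261, -0.0248, 0.0113, -0.1136, -0.0062;
       -0.0034, 0.0752, 0.0245, 0.0410, 0.0021;
       0.0008, -0.0045, -0.0070, -0.0102, -0.0006;
       0.0069, -0.0580, -0.0079, -0.0895, -0.0045;
       0.0075, -0.0613, -0.0046, -0.0966, -0.0086],
    !![0.0835, 0.2512, 0.0132, -0.0022, -0.0002;
       0.0001, -0.0134, -0.0005, -0.0002, 0;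
       0.0006, 0.0018, -0.0021, -0.0008, -0.0001;
       0.0009, 0.0063, 0.0027, -0.0046, -0.0002;
       0.0017, 0.0110, 0.0054, -0.0075, -0.0016]]

theorem boxLower_add_lt_approxZero (k i : Fin 5) : boxLower k i + 1 / 10 ^ 9 < approxZero k i := by
  fin_cases k <;> fin_cases i <;> norm_num [boxLower, approxZero]

theorem approxZero_add_lt_boxUpper (k i : Fin 5) : approxZero k i + 1 / 10 ^ 9 < boxUpper k i := by
  fin_cases k <;> fin_cases i <;> norm_num [boxUpper, approxZero]

theorem norm_approxZero_le (k : Fin 5) : ‖approxZero k‖ ≤ 9 / 4 := by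
  refine (pi_norm_le_iff_of_nonneg (by norm_num)).2 fun i ↦ ?_
  fin_cases k <;> fin_cases i <;> norm_num [approxZero]

theorem norm_approxInverse_le (k : Fin 5) : ‖approxInverse k‖ ≤ 200 := by
  refine (linfty_opNorm_le_iff (by norm_num)).2 fun i ↦ ?_
  fin_cases k <;> fin_cases i
  all_goals
    simp only [approxInverse, Fin.sum_univ_five, of_apply, Fin.zero_eta, Fin.mk_one,
      Fin.reduceFinMk, Matrix.cons_val, Fin.isValue]
    norm_num

theorem norm_one_sub_approxInverse_mul_einsteinJacobian_le (k : Fin 5) :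
    ‖1 - approxInverse k * einsteinJacobian (approxZero k)‖ ≤ 1 / 4 := by
  refine (linfty_opNorm_le_iff (by norm_num)).2 fun i ↦ ?_
  fin_cases k <;> fin_cases i
  all_goals
    simp only [approxInverse, approxZero, einsteinJacobian, jacobianMatrix, Matrix.sub_apply,
      Matrix.mul_apply, Fin.sum_univ_five, one_apply, of_apply, Fin.zero_eta, Fin.mk_one,
      Fin.reduceFinMk, Matrix.cons_val, Fin.isValue, Fin.reduceEq, ↓reduceIte]
    norm_num

theorem norm_approxInverse_mulVec_einsteinSystem_le (k : Fin 5) :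
    ‖approxInverse k *ᵥ einsteinSystem (approxZero k)‖ ≤ 1 / (2 * 10 ^ 9) := by
  refine (pi_norm_le_iff_of_nonneg (by norm_num)).2 fun i ↦ ?_
  fin_cases k <;> fin_cases i
  all_goals
    simp only [approxInverse, approxZero, einsteinSystem, g0, g1, g2, g3, g4, mulVec, dotProduct,
      Fin.sum_univ_five, of_apply, Fin.zero_eta, Fin.mk_one, Fin.reduceFinMk,
      Matrix.cons_val, Fin.isValue]
    norm_num

theorem exists_einsteinSystem_eq_zero_mem_box (k : Fin 5) :
    ∃ p, einsteinSystem p = 0 ∧ ∀ i, boxLower k i < p i ∧ p i < boxUpper k i := by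
  obtain ⟨p, hdist, hp⟩ := exists_einsteinSystem_eq_zero_dist_le (norm_approxZero_le k)
    (norm_approxInverse_le k) (norm_one_sub_approxInverse_mul_einsteinJacobian_le k)
    (norm_approxInverse_mulVec_einsteinSystem_le k)
  refine ⟨p, hp, fun i ↦ ?_⟩
  have hi : |p i - approxZero k i| ≤ 1 / 10 ^ 9 := (dist_le_pi_dist p _ i).trans hdist
  rw [abs_le] at hi
  constructor
  · linarith [boxLower_add_lt_approxZero k i]
  · linarith [approxZero_add_lt_boxUpper k i]

theorem exists_coordinates_mem_box (k : Fin 5) : ∃ u0 u1 u2 x2 x3 : ℝ,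
    boxLower k 0 < u0 ∧ u0 < boxUpper k 0 ∧ boxLower k 1 < u1 ∧ u1 < boxUpper k 1 ∧
    boxLower k 2 < u2 ∧ u2 < boxUpper k 2 ∧ boxLower k 3 < x2 ∧ x2 < boxUpper k 3 ∧
    boxLower k 4 < x3 ∧ x3 < boxUpper k 4 ∧
    g0 u0 u1 u2 x2 x3 = 0 ∧ g1 u0 u1 u2 x2 x3 = 0 ∧ g2 u0 u1 u2 x2 x3 = 0 ∧
    g3 u0 u1 u2 x2 x3 = 0 ∧ g4 u0 u1 u2 x2 x3 = 0 := by
  obtain ⟨p, hp, hbox⟩ := exists_einsteinSystem_eq_zero_mem_box k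
  exact ⟨p 0, p 1, p 2, p 3, p 4, (hbox 0).1, (hbox 0).2, (hbox 1).1, (hbox 1).2, (hbox 2).1,
    (hbox 2).2, (hbox 3).1, (hbox 3).2, (hbox 4).1, (hbox 4).2, congr_fun hp 0, congr_fun hp 1,
    congr_fun hp 2, congr_fun hp 3, congr_fun hp 4⟩

theorem stmt8 :
    (∃ u0 u1 u2 x2 x3 : ℝ,
      0.96 < u0 ∧ u0 < 0.97 ∧ 0.07 < u1 ∧ u1 < 0.08 ∧ 0.24 < u2 ∧ u2 < 0.25 ∧ 0.66 < x2 ∧ x2 < 0.67 ∧ 1.18 < x3 ∧ x3 < 1.19 ∧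
      g0 u0 u1 u2 x2 x3 = 0 ∧ g1 u0 u1 u2 x2 x3 = 0 ∧ g2 u0 u1 u2 x2 x3 = 0 ∧ g3 u0 u1 u2 x2 x3 = 0 ∧ g4 u0 u1 u2 x2 x3 = 0) ∧
    (∃ u0 u1 u2 x2 x3 : ℝ,
      0.12 < u0 ∧ u0 < 0.13 ∧ 0.10 < u1 ∧ u1 < 0.11 ∧ 0.24 < u2 ∧ u2 < 0.25 ∧ 1.00 < x2 ∧ x2 < 1.01 ∧ 0.121 < x3 ∧ x3 < 0.122 ∧
      g0 u0 u1 u2 x2 x3 = 0 ∧ g1 u0 u1 u2 x2 x3 = 0 ∧ g2 u0 u1 u2 x2 x3 = 0 ∧ g3 u0 u1 u2 x2 x3 = 0 ∧ g4 u0 u1 u2 x2 x3 = 0) ∧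
    (∃ u0 u1 u2 x2 x3 : ℝ,
      0.22 < u0 ∧ u0 < 0.23 ∧ 0.15 < u1 ∧ u1 < 0.16 ∧ 1.13 < u2 ∧ u2 < 1.14 ∧ 1.00 < x2 ∧ x2 < 1.01 ∧ 0.207 < x3 ∧ x3 < 0.208 ∧
      g0 u0 u1 u2 x2 x3 = 0 ∧ g1 u0 u1 u2 x2 x3 = 0 ∧ g2 u0 u1 u2 x2 x3 = 0 ∧ g3 u0 u1 u2 x2 x3 = 0 ∧ g4 u0 u1 u2 x2 x3 = 0) ∧
    (∃ u0 u1 u2 x2 x3 : ℝ,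
      1.57 < u0 ∧ u0 < 1.58 ∧ 1.36 < u1 ∧ u1 < 1.37 ∧ 0.31 < u2 ∧ u2 < 0.32 ∧ 1.11 < x2 ∧ x2 < 1.12 ∧ 1.53 < x3 ∧ x3 < 1.54 ∧
      g0 u0 u1 u2 x2 x3 = 0 ∧ g1 u0 u1 u2 x2 x3 = 0 ∧ g2 u0 u1 u2 x2 x3 = 0 ∧ g3 u0 u1 u2 x2 x3 = 0 ∧ g4 u0 u1 u2 x2 x3 = 0) ∧
    (∃ u0 u1 u2 x2 x3 : ℝ,
      2.18 < u0 ∧ u0 < 2.19 ∧ 0.10 < u1 ∧ u1 < 0.11 ∧ 0.33 < u2 ∧ u2 < 0.34 ∧ 1.59 < x2 ∧ x2 < 1.60 ∧ 2.16 < x3 ∧ x3 < 2.17 ∧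
      g0 u0 u1 u2 x2 x3 = 0 ∧ g1 u0 u1 u2 x2 x3 = 0 ∧ g2 u0 u1 u2 x2 x3 = 0 ∧ g3 u0 u1 u2 x2 x3 = 0 ∧ g4 u0 u1 u2 x2 x3 = 0) :=
  ⟨exists_coordinates_mem_box 0, exists_coordinates_mem_box 1, exists_coordinates_mem_box 2,
    exists_coordinates_mem_box 3, exists_coordinates_mem_box 4⟩
end

section
/- For all real numbers x3 and u2 such that 2332*x3^3 - 4013*x3^2 + 1053*x3 - 72 = 0 and 2332*x3^3 - 6345*x3^2 + 4642*x3 - 224*u2 - 405 = 0, the quintuple (u0, u1, u2, x2, x3) with u0 = u1 = x3 and x2 = 1 satisfies g0 = g1 = g2 = g3 = g4 = 0. (These are naturally reductive Einstein solutions on E7(5) with u0 = u1 = x3 and x1 = x2.) -/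
/-!
On the slice `u0 = u1 = x3`, `x2 = 1` the polynomials `g0` and `g3` vanish identically, while
`g1`, `g2`, `g4` are monomials in `x3` times polynomials `A`, `B`, `C` in `x3` and `u2`. Write `p`
for the cubic and `q` for the second relation in the hypotheses, and put
`L = p - q = 224 u2 + 2332 x3² - 3589 x3 + 333`. Then

* `8 C = x3 L - p`,
* `196 B = (53 x3 + 28 u2 - 81) L + (3193 - 2332 x3) C`,
* `224 A = (44 x3 - 45) C - 28 x3 B - q`,

so `p = q = 0` forces successively `L`, `C`, `B` and `A` to vanish.
-/

section ReducedFactors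

variable {R : Type*} [CommRing R]

/-- The factor `A` of `g1` remaining on the slice `u0 = u1 = x3 = x`, `x2 = 1`, where `u = u2`,
once `3 * x ^ 2` is removed. -/
def reducedG1 (x u : R) : R := 5 * x ^ 2 * u + u - 4 * x * u ^ 2 - 2 * x

/-- The factor `B` of `g2` remaining on the slice `u0 = u1 = x3 = x`, `x2 = 1`, where `u = u2`,
once `4 * x` is removed. -/
def reducedG2 (x u : R) : R := 4 * x * u + 32 * u ^ 2 - 45 * u + 9

/-- The factor `C` of `g4` remaining on the slice `u0 = u1 = x3 = x`, `x2 = 1`, where `u = u2`,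
once `-2 * x` is removed. -/
def reducedG4 (x u : R) : R := 53 * x ^ 2 + 28 * x * u - 90 * x + 9

end ReducedFactors

section Restriction

variable (a x u : ℝ)

lemma g0_diag_one : g0 a a u 1 x = 2 * (a ^ 2 - x ^ 2) := by
  unfold g0
  ring

lemma g3_diag_one : g3 a a u 1 x = 6 * x * (x - a) := by
  unfold g3
  ring

lemma g1_slice_eq_mul_reducedG1 : g1 x x u 1 x = 3 * x ^ 2 * reducedG1 x u := by
  unfold g1 reducedG1
  ring

lemma g2_slice_eq_mul_reducedG2 : g2 x x u 1 x = 4 * x * reducedG2 x u := by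
  unfold g2 reducedG2
  ring

lemma g4_slice_eq_mul_reducedG4 : g4 x x u 1 x = -2 * x * reducedG4 x u := by
  unfold g4 reducedG4
  ring

end Restriction

section Elimination

variable {K : Type*} [Field K] [CharZero K] {x u : K}

lemma reducedG4_eq_zero (cubic : 2332 * x ^ 3 - 4013 * x ^ 2 + 1053 * x - 72 = 0)
    (linear : 224 * u + 2332 * x ^ 2 - 3589 * x + 333 = 0) : reducedG4 x u = 0 := by
  unfold reducedG4
  linear_combination (x * linear - cubic) / 8

lemma reducedG2_eq_zero (linear : 224 * u + 2332 * x ^ 2 - 3589 * x + 333 = 0)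
    (hG4 : reducedG4 x u = 0) : reducedG2 x u = 0 := by
  unfold reducedG4 at hG4
  unfold reducedG2
  linear_combination ((53 * x + 28 * u - 81) * linear + (3193 - 2332 * x) * hG4) / 196

lemma reducedG1_eq_zero
    (relation : 2332 * x ^ 3 - 6345 * x ^ 2 + 4642 * x - 224 * u - 405 = 0)
    (hG2 : reducedG2 x u = 0) (hG4 : reducedG4 x u = 0) : reducedG1 x u = 0 := by
  unfold reducedG2 at hG2
  unfold reducedG4 at hG4
  unfold reducedG1
  linear_combination ((44 * x - 45) * hG4 - 28 * x * hG2 - relation) / 224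

end Elimination

theorem stmt9 :
    ∀ x3 u2 : ℝ,
      2332 * x3 ^ 3 - 4013 * x3 ^ 2 + 1053 * x3 - 72 = 0 →
      2332 * x3 ^ 3 - 6345 * x3 ^ 2 + 4642 * x3 - 224 * u2 - 405 = 0 →
      (g0 x3 x3 u2 1 x3 = 0 ∧ g1 x3 x3 u2 1 x3 = 0 ∧ g2 x3 x3 u2 1 x3 = 0 ∧ g3 x3 x3 u2 1 x3 = 0 ∧ g4 x3 x3 u2 1 x3 = 0) := by
  intro x u cubic relation
  have linear : 224 * u + 2332 * x ^ 2 - 3589 * x + 333 = 0 := by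
    linear_combination cubic - relation
  have hG4 : reducedG4 x u = 0 := reducedG4_eq_zero cubic linear
  have hG2 : reducedG2 x u = 0 := reducedG2_eq_zero linear hG4
  have hG1 : reducedG1 x u = 0 := reducedG1_eq_zero relation hG2 hG4
  refine ⟨?_, ?_, ?_, ?_, ?_⟩
  · rw [g0_diag_one, sub_self, mul_zero]
  · rw [g1_slice_eq_mul_reducedG1, hG1, mul_zero]
  · rw [g2_slice_eq_mul_reducedG2, hG2, mul_zero]
  · rw [g3_diag_one, sub_self, mul_zero]
  · rw [g4_slice_eq_mul_reducedG4, hG4, mul_zero]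
end

section
/- For all real numbers x2 and u1 such that (x2 - 1)*(4949*x2^3 - 9379*x2^2 + 5155*x2 - 875) = 0 and 525*u1 - 19796*x2^3 + 57312*x2^2 - 49561*x2 + 11520 = 0, the quintuple (u0, u1, u2, x2, x3) with u0 = u2 = x2 and x3 = 1 satisfies g0 = g1 = g2 = g3 = g4 = 0. (These are naturally reductive Einstein solutions on E7(5) with u0 = u2 = x2 and x1 = x3; for x2 = 1 one recovers the bi-invariant metric.) -/
/-!
The metrics with `u0 = u2 = x2 = x` and `x1 = x3 = 1` are adapted to the symmetric pair
`e7 ⊃ so(12) ⊕ su(2)`, where `k0 + k2 + p2 = so(12)`, `k1 = su(2)` and `p1 + p3` is the complement: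
they scale these three pieces by `x`, `u` and `1`, where `u = u1`. With
`B` the negative of the Killing form, their Ricci curvature has the three eigenvalues

* `(5 / (9 * x) + 4 * x / 9) / 4` on `so(12)`,
* `(1 / (9 * u) + 8 * u / 9) / 4` on `su(2)`,
* `1 / 2 - 11 * x / 48 - u / 48` on the complement,

so the five equations collapse to two. One of these is linear in `u`; eliminating `u` from the other
leaves the quartic in `x`, and modulo the quartic the linear one is solved by a cubic polynomial
in `x`.
-/

section RicciDifferences

variable {R : Type*} [CommRing R]

/-- The Ricci eigenvalue on `so(12)` minus the one on `su(2)`, multiplied by `36 * x * u` to clear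
denominators, for the metric scaling `so(12)`, `su(2)` and their complement by `x`, `u` and `1`. -/
def ricciSO12SubSU2 (x u : R) : R :=
  4 * u * x ^ 2 + 5 * u - 8 * u ^ 2 * x - x

/-- The Ricci eigenvalue on `so(12)` minus the one on the complement of `so(12) ⊕ su(2)`, multiplied
by `144 * x` to clear denominators, for the metric scaling `so(12)`, `su(2)` and their complement by
`x`, `u` and `1`. -/
def ricciSO12SubCompl (x u : R) : R :=
  49 * x ^ 2 + 3 * u * x - 72 * x + 20

/-- The eliminant of `u` from the Einstein condition for the metric scaling `so(12)`, `su(2)` and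
their complement by `x`, `u` and `1`. The root `x = 1` is the bi-invariant metric. -/
def einsteinQuartic (x : R) : R :=
  (x - 1) * (4949 * x ^ 3 - 9379 * x ^ 2 + 5155 * x - 875)

theorem ricciSO12SubCompl_eq_einsteinQuartic_add (x u : R) :
    175 * ricciSO12SubCompl x u =
      4 * einsteinQuartic x +
        x * (525 * u - 19796 * x ^ 3 + 57312 * x ^ 2 - 49561 * x + 11520) := by
  unfold ricciSO12SubCompl einsteinQuartic
  ring

-- Division with remainder by `ricciSO12SubCompl x u` as a polynomial in `u`; the factor `9 * x`
-- clears the powers of its leading coefficient `3 * x`.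
theorem mul_ricciSO12SubSU2_eq_sub_einsteinQuartic (x u : R) :
    9 * (x * ricciSO12SubSU2 x u) =
      (404 * x ^ 2 - 24 * u * x - 576 * x + 175) * ricciSO12SubCompl x u -
        4 * einsteinQuartic x := by
  unfold ricciSO12SubSU2 ricciSO12SubCompl einsteinQuartic
  ring

end RicciDifferences

section EinsteinSystem

variable (x u : ℝ)

theorem g0_eq_mul_ricciSO12SubSU2 : g0 x u x x 1 = 2 * (x * ricciSO12SubSU2 x u) := by
  unfold g0 ricciSO12SubSU2
  ring

theorem g1_eq_mul_ricciSO12SubSU2 : g1 x u x x 1 = -2 * x * (x * ricciSO12SubSU2 x u) := by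
  unfold g1 ricciSO12SubSU2
  ring

theorem g2_eq_mul_ricciSO12SubCompl : g2 x u x x 1 = 3 * x ^ 2 * ricciSO12SubCompl x u := by
  unfold g2 ricciSO12SubCompl
  ring

theorem g3_eq_mul_ricciSO12SubCompl : g3 x u x x 1 = -3 * x * ricciSO12SubCompl x u := by
  unfold g3 ricciSO12SubCompl
  ring

theorem g4_eq_mul_ricciSO12SubCompl : g4 x u x x 1 = 3 * x * ricciSO12SubCompl x u := by
  unfold g4 ricciSO12SubCompl
  ring

end EinsteinSystem

theorem stmt10 :
    ∀ x2 u1 : ℝ,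
      (x2 - 1) * (4949 * x2 ^ 3 - 9379 * x2 ^ 2 + 5155 * x2 - 875) = 0 →
      525 * u1 - 19796 * x2 ^ 3 + 57312 * x2 ^ 2 - 49561 * x2 + 11520 = 0 →
      (g0 x2 u1 x2 x2 1 = 0 ∧ g1 x2 u1 x2 x2 1 = 0 ∧ g2 x2 u1 x2 x2 1 = 0 ∧ g3 x2 u1 x2 x2 1 = 0 ∧ g4 x2 u1 x2 x2 1 = 0) := by
  intro x u hquartic hcubic
  change einsteinQuartic x = 0 at hquartic
  have hcompl : ricciSO12SubCompl x u = 0 := by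
    have h := ricciSO12SubCompl_eq_einsteinQuartic_add x u
    rw [hquartic, hcubic] at h
    linarith
  have hsu2 : x * ricciSO12SubSU2 x u = 0 := by
    have h := mul_ricciSO12SubSU2_eq_sub_einsteinQuartic x u
    rw [hquartic, hcompl] at h
    linarith
  rw [g0_eq_mul_ricciSO12SubSU2, g1_eq_mul_ricciSO12SubSU2, g2_eq_mul_ricciSO12SubCompl,
    g3_eq_mul_ricciSO12SubCompl, g4_eq_mul_ricciSO12SubCompl, hsu2, hcompl]
  simp only [mul_zero, and_self]
end
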